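/- For each n, let X ~ P_{β_1,Q^{CW}} and Y ~ P_{β_2,Q^{CW}} be independent Ising random vectors on {−1,1}^n with the Curie–Weiss interaction matrix Q^{CW} = (1/n)(11ᵀ − I_n), where β_1, β_2 ≥ 0. Then √n · T_n converges in distribution to N(0, (1−m(β_1)²)(1−m(β_2)²)). In particular, the limiting variance equals 1 if and only if β_1 ≤ 1 and β_2 ≤ 1, and is strictly less than 1 otherwise. -/

import Mathlib

open MeasureTheory ProbabilityTheory Filter Topology Matrix

noncomputable section

/-- The `±1` configuration associated to a boolean configuration. -/
def pmVec {ι : Type*} (s : ι → Bool) : ι → ℝ := fun i => if s i then 1 else -1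

/-- Unnormalized Ising weight `exp((β/2) zᵀ Q z)`. -/
def isingWeight {ι : Type*} [Fintype ι] (β : ℝ) (Q : Matrix ι ι ℝ) (z : ι → ℝ) : ℝ :=
  Real.exp (β / 2 * (z ⬝ᵥ Q.mulVec z))

/-- Ising partition function `Z(β,Q)`. -/
def isingZ (ι : Type*) [Fintype ι] [DecidableEq ι] (β : ℝ) (Q : Matrix ι ι ℝ) : ℝ :=
  ∑ s : ι → Bool, isingWeight β Q (pmVec s)

/-- The Ising probability measure `P_{β,Q}` on `{±1}^ι ⊆ ℝ^ι`:
`P(z) = exp((β/2) zᵀQz) / Z(β,Q)`. -/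
def isingMeasure (ι : Type*) [Fintype ι] [DecidableEq ι] (β : ℝ) (Q : Matrix ι ι ℝ) :
    Measure (ι → ℝ) :=
  ∑ s : ι → Bool,
    ENNReal.ofReal (isingWeight β Q (pmVec s) / isingZ ι β Q) • Measure.dirac (pmVec s)

/-- Sample mean `X̄ = (1/n) Σ_i X_i`. -/
def sampleMean {ι : Type*} [Fintype ι] (x : ι → ℝ) : ℝ := (∑ i, x i) / (Fintype.card ι : ℝ)

/-- Sample covariance `T_n = (1/n) Σ_i (X_i - X̄)(Y_i - Ȳ)`. -/
def sampleCov {ι : Type*} [Fintype ι] (x y : ι → ℝ) : ℝ :=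
  (∑ i, (x i - sampleMean x) * (y i - sampleMean y)) / (Fintype.card ι : ℝ)

/-- Convergence in distribution: weak convergence of the laws, tested against
bounded continuous functions. -/
def TendstoInDistribution (μ : ℕ → Measure ℝ) (ν : Measure ℝ) : Prop :=
  ∀ f : BoundedContinuousFunction ℝ ℝ,
    Tendsto (fun n => ∫ x, f x ∂(μ n)) atTop (𝓝 (∫ x, f x ∂ν))

/-- The Curie–Weiss interaction matrix `Q^{CW} = (1/n)(11ᵀ - I)`. -/
def QCW (n : ℕ) : Matrix (Fin n) (Fin n) ℝ := fun i j => if i = j then 0 else (n : ℝ)⁻¹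

/-- `m(β)`: equal to `0` for `β ≤ 1`, and to the unique positive root of
`m = tanh(β m)` for `β > 1`. -/
def isingMag (β : ℝ) : ℝ := sSup {m : ℝ | 0 ≤ m ∧ m = Real.tanh (β * m)}


/-- sign of a boolean -/
def sgB (b : Bool) : ℝ := if b then 1 else -1

/-- single-site probability -/
def prB (a : ℝ) (b : Bool) : ℝ := (1 + a * sgB b) / 2

lemma pmVec_eq {ι : Type*} (s : ι → Bool) (i : ι) : pmVec s i = sgB (s i) := rfl

lemma prB_nonneg {a : ℝ} (ha : |a| ≤ 1) (b : Bool) : 0 ≤ prB a b := by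
  have := abs_le.1 ha
  cases b <;> simp [prB, sgB] <;> linarith

lemma sum_prod_bool {n : ℕ} {R : Type*} [CommSemiring R] (f : Fin n → Bool → R) :
    ∑ s : Fin n → Bool, ∏ i, f i (s i) = ∏ i, ∑ b, f i b :=
  (Fintype.prod_sum f).symm

lemma sum_prB (a : ℝ) : ∑ b, prB a b = 1 := by
  simp [prB, sgB]; ring

lemma sum_prod_prB (n : ℕ) (a : ℝ) : ∑ s : Fin n → Bool, ∏ i, prB a (s i) = 1 := by
  rw [sum_prod_bool]; simp [sum_prB, -Fintype.univ_bool]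

lemma second_moment (n : ℕ) (a : ℝ) :
    ∑ s : Fin n → Bool, (∏ i, prB a (s i)) * (∑ i, (sgB (s i) - a)) ^ 2 = n * (1 - a ^ 2) := by
  have key : ∀ i j : Fin n, ∑ s : Fin n → Bool, (∏ k, prB a (s k)) * ((sgB (s i) - a) * (sgB (s j) - a))
      = if i = j then 1 - a ^ 2 else 0 := by
    intro i j
    have h1 : ∀ s : Fin n → Bool, (∏ k, prB a (s k)) * ((sgB (s i) - a) * (sgB (s j) - a))
        = ∏ k, (prB a (s k) * ((if k = i then sgB (s k) - a else 1) *
            (if k = j then sgB (s k) - a else 1))) := by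
      intro s
      rw [Finset.prod_mul_distrib, Finset.prod_mul_distrib]
      simp [Finset.prod_ite_eq']
    simp_rw [h1]
    rw [sum_prod_bool (fun k b => prB a b * ((if k = i then sgB b - a else 1) *
            (if k = j then sgB b - a else 1)))]
    split_ifs with hij
    · subst hij
      rw [Finset.prod_eq_single i]
      · simp [prB, sgB]; ring
      · intro k _ hk
        simp [hk, prB, sgB]; ring
      · simp
    · apply Finset.prod_eq_zero (Finset.mem_univ i)
      simp [hij, prB, sgB]; ring
  have h2 : ∀ s : Fin n → Bool, (∏ i, prB a (s i)) * (∑ i, (sgB (s i) - a)) ^ 2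
      = ∑ i, ∑ j, (∏ k, prB a (s k)) * ((sgB (s i) - a) * (sgB (s j) - a)) := by
    intro s
    rw [sq, Finset.sum_mul_sum, Finset.mul_sum]
    simp_rw [Finset.mul_sum]
  simp_rw [h2]
  rw [Finset.sum_comm]
  simp_rw [Finset.sum_comm (s := (Finset.univ : Finset (Fin n → Bool))), key]
  simp
  ring

/-- one-site characteristic function -/
def psiB (a b τ : ℝ) : ℂ :=
  ∑ x, ∑ y, ((prB a x * prB b y : ℝ) : ℂ) * Complex.exp (((τ * ((sgB x - a) * (sgB y - b)) : ℝ) : ℂ) * Complex.I)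

lemma norm_psiB_le {a b : ℝ} (ha : |a| ≤ 1) (hb : |b| ≤ 1) (τ : ℝ) : ‖psiB a b τ‖ ≤ 1 := by
  calc ‖psiB a b τ‖ ≤ ∑ x, ∑ y, prB a x * prB b y := by
        unfold psiB
        refine (norm_sum_le _ _).trans (Finset.sum_le_sum fun x _ => ?_)
        refine (norm_sum_le _ _).trans (Finset.sum_le_sum fun y _ => ?_)
        rw [norm_mul, Complex.norm_exp_ofReal_mul_I, Complex.norm_real, mul_one,
          Real.norm_of_nonneg (mul_nonneg (prB_nonneg ha x) (prB_nonneg hb y))]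
    _ = 1 := by
        simp_rw [← Finset.mul_sum, sum_prB]
        simp only [mul_one, sum_prB]

lemma psiB_approx {a b : ℝ} (ha : |a| ≤ 1) (hb : |b| ≤ 1) (τ : ℝ) :
    ‖psiB a b τ - Complex.exp ((-(τ ^ 2 * ((1 - a ^ 2) * (1 - b ^ 2)) / 2) : ℝ) : ℂ)‖ ≤
      (4 * |τ|) ^ 3 * Real.exp (4 * |τ|) + (τ ^ 2 / 2) ^ 2 * Real.exp (τ ^ 2 / 2) := by
  set w : ℝ := τ ^ 2 * ((1 - a ^ 2) * (1 - b ^ 2)) / 2 with hw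
  have ha2 : a ^ 2 ≤ 1 := (sq_le_one_iff_abs_le_one a).2 ha
  have hb2 : b ^ 2 ≤ 1 := (sq_le_one_iff_abs_le_one b).2 hb
  have hw0 : 0 ≤ w := by
    have := mul_nonneg (sub_nonneg.2 ha2) (sub_nonneg.2 hb2)
    positivity
  have hw1 : w ≤ τ ^ 2 / 2 := by
    have h1 : (1 - a ^ 2) * (1 - b ^ 2) ≤ 1 :=
      mul_le_one₀ (by nlinarith) (by nlinarith) (by nlinarith)
    rw [hw]
    nlinarith [sq_nonneg τ]
  have e1 : ‖psiB a b τ - ((1 - w : ℝ) : ℂ)‖ ≤ (4 * |τ|) ^ 3 * Real.exp (4 * |τ|) := by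
    have h1 : ((1 - w : ℝ) : ℂ) = ∑ x, ∑ y, ((prB a x * prB b y : ℝ) : ℂ) *
        ∑ m ∈ Finset.range 3, (((τ * ((sgB x - a) * (sgB y - b)) : ℝ) : ℂ) * Complex.I) ^ m / (m.factorial : ℂ) := by
      simp only [Finset.sum_range_succ, Finset.sum_range_zero, Fintype.sum_bool, prB, sgB, hw, mul_pow, Complex.I_sq]
      norm_num [Nat.factorial]
      ring
    rw [h1, psiB, ← Finset.sum_sub_distrib]
    simp_rw [← Finset.sum_sub_distrib, ← mul_sub]
    calc _ ≤ ∑ x, ∑ y, prB a x * prB b y * ((4 * |τ|) ^ 3 * Real.exp (4 * |τ|)) := by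
          refine (norm_sum_le _ _).trans (Finset.sum_le_sum fun x _ => ?_)
          refine (norm_sum_le _ _).trans (Finset.sum_le_sum fun y _ => ?_)
          have hp := mul_nonneg (prB_nonneg ha x) (prB_nonneg hb y)
          rw [norm_mul, Complex.norm_real, Real.norm_of_nonneg hp]
          refine mul_le_mul_of_nonneg_left ?_ hp
          refine (Complex.norm_exp_sub_sum_le_norm_mul_exp _ 3).trans ?_
          have hx : ∀ {c : ℝ} (z : Bool), |c| ≤ 1 → |sgB z - c| ≤ 2 := by
            intro c z hc
            have := abs_le.1 hc
            rw [abs_le]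
            cases z <;> simp [sgB] <;> constructor <;> linarith
          have hn : ‖((τ * ((sgB x - a) * (sgB y - b)) : ℝ) : ℂ) * Complex.I‖ ≤ 4 * |τ| := by
            rw [norm_mul, Complex.norm_I, mul_one, Complex.norm_real, Real.norm_eq_abs, abs_mul, abs_mul]
            have := mul_le_mul (hx x ha) (hx y hb) (abs_nonneg _) (by norm_num)
            nlinarith [abs_nonneg τ]
          gcongr
      _ = _ := by
        simp_rw [← Finset.sum_mul, ← Finset.mul_sum, sum_prB, mul_one, sum_prB, one_mul]
  have e2 : ‖((1 - w : ℝ) : ℂ) - Complex.exp ((-w : ℝ) : ℂ)‖ ≤ (τ ^ 2 / 2) ^ 2 * Real.exp (τ ^ 2 / 2) := by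
    rw [norm_sub_rev]
    have := Complex.norm_exp_sub_sum_le_norm_mul_exp ((-w : ℝ) : ℂ) 2
    have h3 : ∑ m ∈ Finset.range 2, ((-w : ℝ) : ℂ) ^ m / (m.factorial : ℂ) = ((1 - w : ℝ) : ℂ) := by
      simp [Finset.sum_range_succ]; ring
    rw [h3] at this
    refine this.trans ?_
    have hn : ‖((-w : ℝ) : ℂ)‖ = w := by
      rw [Complex.norm_real, Real.norm_eq_abs, abs_neg, abs_of_nonneg hw0]
    rw [hn]
    gcongr
  calc _ = ‖(psiB a b τ - ((1 - w : ℝ) : ℂ)) + (((1 - w : ℝ) : ℂ) - Complex.exp ((-w : ℝ) : ℂ))‖ := by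
        congr 1; ring
    _ ≤ _ := (norm_add_le _ _).trans (add_le_add e1 e2)

lemma norm_pow_sub_pow_le' {x y : ℂ} (hx : ‖x‖ ≤ 1) (hy : ‖y‖ ≤ 1) (n : ℕ) :
    ‖x ^ n - y ^ n‖ ≤ n * ‖x - y‖ := by
  induction n with
  | zero => simp
  | succ k ih =>
    have : x ^ (k + 1) - y ^ (k + 1) = x * (x ^ k - y ^ k) + (x - y) * y ^ k := by ring
    rw [this]
    refine (norm_add_le _ _).trans ?_
    rw [norm_mul, norm_mul, norm_pow]
    have h1 : ‖y‖ ^ k ≤ 1 := pow_le_one₀ (norm_nonneg _) hy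
    have h2 : ‖x‖ * ‖x ^ k - y ^ k‖ ≤ 1 * ‖x ^ k - y ^ k‖ := by gcongr
    have h3 : ‖x - y‖ * ‖y‖ ^ k ≤ ‖x - y‖ * 1 := by gcongr
    push_cast
    linarith

/-- conditional characteristic function of `√n T_n` -/
def FB (n : ℕ) (t a b : ℝ) : ℂ :=
  ∑ s : Fin n → Bool, ∑ u : Fin n → Bool,
    (((∏ i, prB a (s i)) * (∏ i, prB b (u i)) : ℝ) : ℂ) *
      Complex.exp (((t * (Real.sqrt n * sampleCov (pmVec s) (pmVec u)) : ℝ) : ℂ) * Complex.I)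

lemma psiB_pow (n : ℕ) (a b τ : ℝ) : psiB a b τ ^ n =
    ∑ s : Fin n → Bool, ∑ u : Fin n → Bool,
    (((∏ i, prB a (s i)) * (∏ i, prB b (u i)) : ℝ) : ℂ) *
      Complex.exp (((τ * ∑ i, (sgB (s i) - a) * (sgB (u i) - b) : ℝ) : ℂ) * Complex.I) := by
  have h1 : ∀ s u : Fin n → Bool, (((∏ i, prB a (s i)) * (∏ i, prB b (u i)) : ℝ) : ℂ) *
      Complex.exp (((τ * ∑ i, (sgB (s i) - a) * (sgB (u i) - b) : ℝ) : ℂ) * Complex.I)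
      = ∏ i, (((prB a (s i) * prB b (u i) : ℝ) : ℂ) *
        Complex.exp (((τ * ((sgB (s i) - a) * (sgB (u i) - b)) : ℝ) : ℂ) * Complex.I)) := by
    intro s u
    rw [Finset.prod_mul_distrib, ← Complex.exp_sum, ← Finset.prod_mul_distrib, Complex.ofReal_prod,
      Finset.mul_sum, Complex.ofReal_sum, Finset.sum_mul]
  simp_rw [h1]
  have h2 : ∀ s : Fin n → Bool, ∑ u : Fin n → Bool, ∏ i, (((prB a (s i) * prB b (u i) : ℝ) : ℂ) *
        Complex.exp (((τ * ((sgB (s i) - a) * (sgB (u i) - b)) : ℝ) : ℂ) * Complex.I))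
      = ∏ i, ∑ y, (((prB a (s i) * prB b y : ℝ) : ℂ) *
        Complex.exp (((τ * ((sgB (s i) - a) * (sgB y - b)) : ℝ) : ℂ) * Complex.I)) := by
    intro s
    exact sum_prod_bool (fun i y => (((prB a (s i) * prB b y : ℝ) : ℂ) *
        Complex.exp (((τ * ((sgB (s i) - a) * (sgB y - b)) : ℝ) : ℂ) * Complex.I)))
  simp_rw [h2]
  rw [sum_prod_bool (fun (i : Fin n) x => ∑ y, (((prB a x * prB b y : ℝ) : ℂ) *
        Complex.exp (((τ * ((sgB x - a) * (sgB y - b)) : ℝ) : ℂ) * Complex.I)))]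
  simp [psiB]

lemma sampleCov_eq {n : ℕ} (hn : 1 ≤ n) (a b : ℝ) (x y : Fin n → ℝ) :
    sampleCov x y = (∑ i, (x i - a) * (y i - b)) / n
      - ((∑ i, (x i - a)) / n) * ((∑ i, (y i - b)) / n) := by
  have hn' : (n : ℝ) ≠ 0 := by positivity
  have e : ∀ c d : ℝ, ∑ i, (x i - c) * (y i - d) =
      ∑ i, x i * y i - c * ∑ i, y i - d * ∑ i, x i + n * (c * d) := by
    intro c d
    simp_rw [sub_mul, mul_sub, Finset.sum_sub_distrib, ← Finset.mul_sum, ← Finset.sum_mul]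
    simp
    ring
  simp only [sampleCov, sampleMean, Fintype.card_fin, e, Finset.sum_sub_distrib]
  simp
  field_simp
  ring

lemma norm_expI_sub_le (x y : ℝ) :
    ‖Complex.exp ((x : ℂ) * Complex.I) - Complex.exp ((y : ℂ) * Complex.I)‖ ≤ |x - y| := by
  have : Complex.exp ((x : ℂ) * Complex.I) - Complex.exp ((y : ℂ) * Complex.I)
      = Complex.exp ((y : ℂ) * Complex.I) * (Complex.exp (Complex.I * ((x - y : ℝ) : ℂ)) - 1) := by
    rw [mul_sub, ← Complex.exp_add]
    push_cast
    ring_nf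
  rw [this, norm_mul, Complex.norm_exp_ofReal_mul_I, one_mul]
  exact Real.norm_exp_I_mul_ofReal_sub_one_le

lemma FB_sub_psi {n : ℕ} (hn : 1 ≤ n) {a b : ℝ} (ha : |a| ≤ 1) (hb : |b| ≤ 1) (t : ℝ) :
    ‖FB n t a b - psiB a b (t / Real.sqrt n) ^ n‖ ≤ |t| / Real.sqrt n := by
  have hn0 : (0 : ℝ) < n := by exact_mod_cast hn
  have hs : 0 < Real.sqrt n := Real.sqrt_pos.2 hn0
  have hss : Real.sqrt n * Real.sqrt n = n := Real.mul_self_sqrt hn0.le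
  rw [FB, psiB_pow, ← Finset.sum_sub_distrib]
  simp_rw [← Finset.sum_sub_distrib, ← mul_sub]
  have ptw : ∀ s u : Fin n → Bool,
      ‖Complex.exp (((t * (Real.sqrt n * sampleCov (pmVec s) (pmVec u)) : ℝ) : ℂ) * Complex.I)
       - Complex.exp (((t / Real.sqrt n * ∑ i, (sgB (s i) - a) * (sgB (u i) - b) : ℝ) : ℂ) * Complex.I)‖
      ≤ |t| * Real.sqrt n / (2 * n ^ 2) * ((∑ i, (sgB (s i) - a)) ^ 2 + (∑ i, (sgB (u i) - b)) ^ 2) := by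
    intro s u
    refine (norm_expI_sub_le _ _).trans ?_
    have : t * (Real.sqrt n * sampleCov (pmVec s) (pmVec u)) - t / Real.sqrt n * ∑ i, (sgB (s i) - a) * (sgB (u i) - b)
        = - (t * Real.sqrt n / n ^ 2 * ((∑ i, (sgB (s i) - a)) * (∑ i, (sgB (u i) - b)))) := by
      rw [sampleCov_eq hn a b]
      simp only [pmVec_eq]
      generalize ∑ i, (sgB (s i) - a) * (sgB (u i) - b) = A
      generalize ∑ i, (sgB (s i) - a) = B
      generalize ∑ i, (sgB (u i) - b) = C
      have h1 : t / Real.sqrt n = t * Real.sqrt n / n := by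
        rw [div_eq_div_iff hs.ne' hn0.ne']; linear_combination (-t) * hss
      rw [h1]
      ring
    rw [this, abs_neg, abs_mul, abs_div, abs_mul, abs_of_pos hs, abs_of_pos (by positivity : (0:ℝ) < (n:ℝ) ^ 2)]
    have h2 : ∀ B C : ℝ, |B * C| ≤ (B ^ 2 + C ^ 2) / 2 := by
      intro B C
      rw [abs_le]; constructor <;> nlinarith [sq_nonneg (B + C), sq_nonneg (B - C)]
    calc _ ≤ |t| * Real.sqrt n / n ^ 2 * (((∑ i, (sgB (s i) - a)) ^ 2 + (∑ i, (sgB (u i) - b)) ^ 2) / 2) := by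
          gcongr; exact h2 _ _
      _ = _ := by ring
  have hP : ∀ {c : ℝ} (_ : |c| ≤ 1) (s : Fin n → Bool), 0 ≤ ∏ i, prB c (s i) :=
    fun hc s => Finset.prod_nonneg fun i _ => prB_nonneg hc _
  calc _ ≤ ∑ s : Fin n → Bool, ∑ u : Fin n → Bool, ((∏ i, prB a (s i)) * (∏ i, prB b (u i))) *
        (|t| * Real.sqrt n / (2 * n ^ 2) * ((∑ i, (sgB (s i) - a)) ^ 2 + (∑ i, (sgB (u i) - b)) ^ 2)) := by
          refine (norm_sum_le _ _).trans (Finset.sum_le_sum fun s _ => ?_)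
          refine (norm_sum_le _ _).trans (Finset.sum_le_sum fun u _ => ?_)
          have hp := mul_nonneg (hP ha s) (hP hb u)
          rw [norm_mul, Complex.norm_real, Real.norm_of_nonneg hp]
          exact mul_le_mul_of_nonneg_left (ptw s u) hp
    _ = |t| * Real.sqrt n / (2 * n ^ 2) * ((∑ s : Fin n → Bool, (∏ i, prB a (s i)) * (∑ i, (sgB (s i) - a)) ^ 2) * (∑ u : Fin n → Bool, ∏ i, prB b (u i))
          + (∑ s : Fin n → Bool, ∏ i, prB a (s i)) * (∑ u : Fin n → Bool, (∏ i, prB b (u i)) * (∑ i, (sgB (u i) - b)) ^ 2)) := by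
        rw [Finset.sum_mul_sum, Finset.sum_mul_sum, ← Finset.sum_add_distrib, Finset.mul_sum]
        refine Finset.sum_congr rfl fun s _ => ?_
        rw [← Finset.sum_add_distrib, Finset.mul_sum]
        refine Finset.sum_congr rfl fun u _ => ?_
        ring
    _ = |t| * Real.sqrt n / (2 * n ^ 2) * (n * (1 - a ^ 2) + n * (1 - b ^ 2)) := by
        rw [second_moment, second_moment, sum_prod_prB, sum_prod_prB]; ring
    _ ≤ |t| * Real.sqrt n / (2 * n ^ 2) * (n * 1 + n * 1) := by
        gcongr <;> nlinarith [sq_nonneg a, sq_nonneg b]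
    _ = |t| / Real.sqrt n := by
        rw [div_mul_eq_mul_div, div_eq_div_iff (by positivity) hs.ne']
        linear_combination (2 * n * |t|) * hss

lemma FB_tendsto (t : ℝ) : ∃ δ : ℕ → ℝ, Tendsto δ atTop (𝓝 0) ∧ ∀ n, 1 ≤ n → ∀ a b : ℝ,
    |a| ≤ 1 → |b| ≤ 1 →
    ‖FB n t a b - Complex.exp ((-(t ^ 2 * ((1 - a ^ 2) * (1 - b ^ 2)) / 2) : ℝ) : ℂ)‖ ≤ δ n := by
  refine ⟨fun n => (|t| + 64 * |t| ^ 3 * Real.exp (4 * |t|)+ t ^ 4 / 4 * Real.exp (t ^ 2 / 2)) / Real.sqrt n, ?_, ?_⟩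
  · apply Tendsto.div_atTop tendsto_const_nhds
    exact Real.tendsto_sqrt_atTop.comp tendsto_natCast_atTop_atTop
  · intro n hn a b ha hb
    have hn1 : (1 : ℝ) ≤ n := by exact_mod_cast hn
    have hn0 : (0 : ℝ) < n := by linarith
    have hs : 0 < Real.sqrt n := Real.sqrt_pos.2 hn0
    have hs1 : 1 ≤ Real.sqrt n := Real.one_le_sqrt.2 hn1
    have hss : Real.sqrt n ^ 2 = n := Real.sq_sqrt hn0.le
    have h1 := FB_sub_psi hn ha hb t
    set τ := t / Real.sqrt n with hτ
    have hτ2 : n * τ ^ 2 = t ^ 2 := by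
      rw [hτ, div_pow, hss]; field_simp
    have hτt : |τ| ≤ |t| := by
      rw [hτ, abs_div, abs_of_pos hs]; exact div_le_self (abs_nonneg _) hs1
    have hex : Complex.exp ((-(t ^ 2 * ((1 - a ^ 2) * (1 - b ^ 2)) / 2) : ℝ) : ℂ)
        = Complex.exp ((-(τ ^ 2 * ((1 - a ^ 2) * (1 - b ^ 2)) / 2) : ℝ) : ℂ) ^ n := by
      rw [← Complex.exp_nat_mul]
      congr 1
      rw [← hτ2]
      push_cast
      ring
    have ha2 : a ^ 2 ≤ 1 := (sq_le_one_iff_abs_le_one a).2 ha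
    have hb2 : b ^ 2 ≤ 1 := (sq_le_one_iff_abs_le_one b).2 hb
    have hy : ‖Complex.exp ((-(τ ^ 2 * ((1 - a ^ 2) * (1 - b ^ 2)) / 2) : ℝ) : ℂ)‖ ≤ 1 := by
      rw [Complex.norm_exp_ofReal, Real.exp_le_one_iff]
      have := mul_nonneg (sub_nonneg.2 ha2) (sub_nonneg.2 hb2)
      have : 0 ≤ τ ^ 2 * ((1 - a ^ 2) * (1 - b ^ 2)) / 2 := by positivity
      linarith
    have h2 := norm_pow_sub_pow_le' (norm_psiB_le ha hb τ) hy n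
    have h3 := psiB_approx ha hb τ
    have h4 : n * ((4 * |τ|) ^ 3 * Real.exp (4 * |τ|) + (τ ^ 2 / 2) ^ 2 * Real.exp (τ ^ 2 / 2))
        ≤ (64 * |t| ^ 3 * Real.exp (4 * |t|)+ t ^ 4 / 4 * Real.exp (t ^ 2 / 2)) / Real.sqrt n := by
      have e1 : n * |τ| ^ 3 = |t| ^ 3 / Real.sqrt n := by
        rw [hτ, abs_div, abs_of_pos hs, div_pow]; field_simp; linear_combination (-|t| ^ 3) * hss
      have e2 : n * τ ^ 4 ≤ t ^ 4 / Real.sqrt n := by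
        have : n * τ ^ 4 = t ^ 4 / n := by
          rw [hτ, div_pow]
          have : Real.sqrt n ^ 4 = n ^ 2 := by linear_combination (Real.sqrt n ^ 2 + n) * hss
          rw [this]; field_simp
        rw [this]
        gcongr
        nlinarith
      have e3 : Real.exp (4 * |τ|) ≤ Real.exp (4 * |t|) := by gcongr
      have e4 : Real.exp (τ ^ 2 / 2) ≤ Real.exp (t ^ 2 / 2) := by
        have := sq_le_sq.2 hτt
        gcongr
      calc _ = 64 * (n * |τ| ^ 3) * Real.exp (4 * |τ|) + (n * τ ^ 4) / 4 * Real.exp (τ ^ 2 / 2) := by ring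
        _ ≤ 64 * (|t| ^ 3 / Real.sqrt n) * Real.exp (4 * |t|) + (t ^ 4 / Real.sqrt n) / 4 * Real.exp (t ^ 2 / 2) := by
          rw [e1]
          gcongr
        _ = _ := by ring
    rw [hex]
    calc _ ≤ ‖FB n t a b - psiB a b τ ^ n‖ + ‖psiB a b τ ^ n - Complex.exp ((-(τ ^ 2 * ((1 - a ^ 2) * (1 - b ^ 2)) / 2) : ℝ) : ℂ) ^ n‖ := norm_sub_le_norm_sub_add_norm_sub _ _ _
      _ ≤ |t| / Real.sqrt n + (64 * |t| ^ 3 * Real.exp (4 * |t|)+ t ^ 4 / 4 * Real.exp (t ^ 2 / 2)) / Real.sqrt n := by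
        refine add_le_add h1 (h2.trans (le_trans ?_ h4))
        gcongr
      _ = _ := by ring

lemma hasDerivAt_tanh' (x : ℝ) : HasDerivAt Real.tanh (1 - Real.tanh x ^ 2) x := by
  have h := (Real.hasDerivAt_sinh x).div (Real.hasDerivAt_cosh x) (Real.cosh_pos x).ne'
  have e : Real.tanh = Real.sinh / Real.cosh := by
    funext y; simp [Real.tanh_eq_sinh_div_cosh]
  rw [e]
  refine h.congr_deriv ?_
  have := (Real.cosh_pos x).ne'
  simp only [Pi.div_apply]
  field_simp

lemma continuous_tanh' : Continuous Real.tanh :=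
  continuous_iff_continuousAt.2 fun x => (hasDerivAt_tanh' x).continuousAt

lemma tanh_ne_zero' {x : ℝ} (hx : x ≠ 0) : Real.tanh x ≠ 0 := by
  intro h
  exact hx (Real.tanh_injective (by rw [h, Real.tanh_zero]))

lemma tanh_lt_self {x : ℝ} (hx : 0 < x) : Real.tanh x < x := by
  obtain ⟨c, hc, h⟩ := exists_hasDerivAt_eq_slope Real.tanh (fun x => 1 - Real.tanh x ^ 2) hx
    continuous_tanh'.continuousOn (fun y _ => hasDerivAt_tanh' y)
  have h1 : Real.tanh c ^ 2 > 0 := by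
    have := tanh_ne_zero' hc.1.ne'
    positivity
  rw [Real.tanh_zero, sub_zero, sub_zero, eq_div_iff hx.ne'] at h
  nlinarith

lemma tanh_root_unique {β x y : ℝ} (hβ : 0 < β) (hx : 0 < x) (hxy : x < y)
    (h1 : x = Real.tanh (β * x)) (h2 : y = Real.tanh (β * y)) : False := by
  have hd : ∀ z, HasDerivAt (fun z => Real.tanh (β * z) - z) ((1 - Real.tanh (β * z) ^ 2) * β - 1) z := by
    intro z
    have := (hasDerivAt_tanh' (β * z)).comp z ((hasDerivAt_id z).const_mul β)
    refine (this.sub (hasDerivAt_id z)).congr_deriv ?_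
    simp
  have hc : Continuous (fun z => Real.tanh (β * z) - z) :=
    continuous_iff_continuousAt.2 fun x => (hd x).continuousAt
  obtain ⟨c, hc1, hc2⟩ := exists_hasDerivAt_eq_zero hx hc.continuousOn (by simp [← h1]) (fun z _ => hd z)
  obtain ⟨d, hd1, hd2⟩ := exists_hasDerivAt_eq_zero hxy hc.continuousOn (by simp [← h1, ← h2]) (fun z _ => hd z)
  have h3 : Real.tanh (β * c) ^ 2 = Real.tanh (β * d) ^ 2 := by
    have : (Real.tanh (β * c) ^ 2 - Real.tanh (β * d) ^ 2) * β = 0 := by linarith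
    rcases mul_eq_zero.1 this with h | h <;> linarith
  rcases sq_eq_sq_iff_eq_or_eq_neg.1 h3 with h | h
  · have := Real.tanh_injective h
    have := mul_left_cancel₀ hβ.ne' this
    linarith [hc1.2, hd1.1]
  · rw [← Real.tanh_neg] at h
    have := Real.tanh_injective h
    have h4 : c = -d := mul_left_cancel₀ hβ.ne' (by linarith)
    linarith [hc1.1, hd1.1]

lemma isingMag_of_le {β : ℝ} (h0 : 0 ≤ β) (h1 : β ≤ 1) : isingMag β = 0 := by
  have : {m : ℝ | 0 ≤ m ∧ m = Real.tanh (β * m)} = {0} := by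
    ext m
    simp only [Set.mem_ofPred_eq, Set.mem_singleton_iff]
    constructor
    · rintro ⟨hm, h⟩
      by_contra hne
      have hm' : 0 < m := lt_of_le_of_ne hm (Ne.symm hne)
      rcases h0.eq_or_lt with rfl | hb
      · simp at h; exact hne h
      · have := tanh_lt_self (mul_pos hb hm')
        nlinarith
    · rintro rfl; simp
  rw [isingMag, this, csSup_singleton]

lemma isingMag_eq {β m : ℝ} (hβ : 0 < β) (hm : 0 < m) (h : m = Real.tanh (β * m)) :
    isingMag β = m := by
  have : IsGreatest {m : ℝ | 0 ≤ m ∧ m = Real.tanh (β * m)} m := by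
    refine ⟨⟨hm.le, h⟩, ?_⟩
    rintro m' ⟨_, h'⟩
    by_contra hlt
    push Not at hlt
    exact tanh_root_unique hβ hm hlt h h'
  exact this.csSup_eq

/-- the Laplace potential -/
def VB (β θ : ℝ) : ℝ := θ ^ 2 / (2 * β) - Real.log (Real.cosh θ)

lemma hasDerivAt_VB (β θ : ℝ) (hβ : 0 < β) : HasDerivAt (VB β) (θ / β - Real.tanh θ) θ := by
  have h1 := ((hasDerivAt_id θ).pow 2).div_const (2 * β)
  have h2 := (Real.hasDerivAt_cosh θ).log (Real.cosh_pos θ).ne'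
  have h3 := h1.sub h2
  have e : VB β = (fun x => (id ^ 2 : ℝ → ℝ) x / (2 * β)) - fun x => Real.log (Real.cosh x) := by
    funext x; simp [VB]
  rw [e]
  refine h3.congr_deriv ?_
  rw [Real.tanh_eq_sinh_div_cosh]
  simp
  field_simp

lemma continuous_VB {β : ℝ} (hβ : 0 < β) : Continuous (VB β) :=
  continuous_iff_continuousAt.2 fun x => (hasDerivAt_VB β x hβ).continuousAt

lemma VB_coercive {β : ℝ} (hβ : 0 < β) : Tendsto (VB β) (cocompact ℝ) atTop := by
  have h1 : ∀ θ, ‖θ‖ - β / 2 * 4 + 0 ≤ VB β θ := by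
    intro θ
    have : Real.log (Real.cosh θ) ≤ |θ| := by
      rw [Real.log_le_iff_le_exp (Real.cosh_pos θ), Real.cosh_eq]
      have h1 : Real.exp θ ≤ Real.exp |θ| := Real.exp_le_exp.2 (le_abs_self θ)
      have h2 : Real.exp (-θ) ≤ Real.exp |θ| := Real.exp_le_exp.2 (neg_le_abs θ)
      linarith
    rw [VB, Real.norm_eq_abs]
    have h2 : 2 * |θ| - β / 2 * 4 ≤ θ ^ 2 / (2 * β) := by
      rw [le_div_iff₀ (by positivity), ← sq_abs]
      nlinarith [sq_nonneg (|θ| - 2 * β)]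
    linarith
  refine tendsto_atTop_mono h1 ?_
  simp only [add_zero]
  exact tendsto_atTop_add_const_right _ _ (tendsto_norm_cocompact_atTop)

lemma VB_neg {β : ℝ} (hβ : 1 < β) : VB β (Real.sqrt (β - 1)) < 0 := by
  set θ := Real.sqrt (β - 1) with hθ
  have h2 : θ ^ 2 = β - 1 := Real.sq_sqrt (by linarith)
  have hθ0 : 0 ≤ θ := Real.sqrt_nonneg _
  have hc : 1 + θ ^ 2 / 2 ≤ Real.cosh θ := by
    have h3 : Real.cosh θ = 1 + 2 * Real.sinh (θ / 2) ^ 2 := by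
      have := Real.cosh_two_mul (θ / 2)
      rw [Real.cosh_sq, mul_div_cancel₀ _ (two_ne_zero)] at this
      linarith
    have h4 : θ / 2 ≤ Real.sinh (θ / 2) := Real.self_le_sinh_iff.2 (by positivity)
    rw [h3]
    nlinarith
  have hpos : 0 < 1 + θ ^ 2 / 2 := by positivity
  have h5 := Real.one_sub_inv_le_log_of_pos hpos
  have h6 := Real.log_le_log hpos hc
  rw [VB]
  have h7 : θ ^ 2 / (2 * β) < 1 - (1 + θ ^ 2 / 2)⁻¹ := by
    rw [h2]
    have : 1 - (1 + (β - 1) / 2)⁻¹ = (β - 1) / (β + 1) := by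
      have : β + 1 ≠ 0 := by linarith
      have : 1 + (β - 1) / 2 = (β + 1) / 2 := by ring
      rw [this]; field_simp; ring
    rw [this]
    apply div_lt_div_of_pos_left <;> linarith
  linarith

lemma VB_min_root {β θ : ℝ} (hβ : 0 < β) (h : ∀ x, VB β θ ≤ VB β x) : θ / β = Real.tanh θ := by
  have h1 : IsLocalMin (VB β) θ := Filter.Eventually.of_forall h
  have := h1.hasDerivAt_eq_zero (hasDerivAt_VB β θ hβ)
  linarith

lemma VB_min_pos {β θ : ℝ} (hβ : 1 < β) (h : ∀ x, VB β θ ≤ VB β x) :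
    0 < isingMag β ∧ isingMag β = |θ| / β ∧ isingMag β ^ 2 = Real.tanh θ ^ 2 := by
  have hβ0 : 0 < β := by linarith
  have h1 := VB_min_root hβ0 h
  have hne : θ ≠ 0 := by
    rintro rfl
    have := (h _).trans_lt (VB_neg hβ)
    simp [VB] at this
  have hm : |θ| / β = Real.tanh (β * (|θ| / β)) := by
    rw [mul_div_cancel₀ _ hβ0.ne']
    rcases abs_choice θ with h' | h' <;> rw [h']
    · exact h1
    · rw [Real.tanh_neg, ← h1]; ring
  have hp : 0 < |θ| / β := by positivity
  have := isingMag_eq hβ0 hp hm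
  refine ⟨by rw [this]; exact hp, this, ?_⟩
  rw [this, ← h1, div_pow, div_pow, sq_abs]

lemma isingMag_pos {β : ℝ} (hβ : 1 < β) : 0 < isingMag β := by
  obtain ⟨θ, h⟩ := (continuous_VB (by linarith : 0 < β)).exists_forall_le (VB_coercive (by linarith))
  exact (VB_min_pos hβ h).1

lemma VB_min {β θ : ℝ} (hβ : 0 < β) (h : ∀ x, VB β θ ≤ VB β x) :
    Real.tanh θ ^ 2 = isingMag β ^ 2 := by
  rcases le_or_gt β 1 with h1 | h1
  · rw [isingMag_of_le hβ.le h1]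
    have hr := VB_min_root hβ h
    rcases lt_trichotomy θ 0 with h2 | h2 | h2
    · have h3 := tanh_lt_self (neg_pos.2 h2)
      rw [Real.tanh_neg, ← hr] at h3
      have : -θ ≤ -θ / β := by rw [le_div_iff₀ hβ]; nlinarith
      rw [neg_div] at this
      linarith
    · simp [h2]
    · have h3 := tanh_lt_self h2
      rw [← hr] at h3
      have : θ ≤ θ / β := by rw [le_div_iff₀ hβ]; nlinarith
      linarith
  · exact (VB_min_pos h1 h).2.2.symm

lemma isingMag_sq_lt {β : ℝ} (hβ : 0 ≤ β) : isingMag β ^ 2 < 1 := by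
  rcases le_or_gt β 1 with h1 | h1
  · simp [isingMag_of_le hβ h1]
  · have hb : 0 < β := by linarith
    obtain ⟨θ, h⟩ := (continuous_VB hb).exists_forall_le (VB_coercive hb)
    rw [← VB_min hb h]
    exact Real.tanh_sq_lt_one θ

lemma isingMag_sq_nonneg_pos {β : ℝ} (hβ : 0 ≤ β) : isingMag β ^ 2 = 0 ↔ β ≤ 1 := by
  constructor
  · intro h
    by_contra h1
    push Not at h1
    have := isingMag_pos h1
    have : isingMag β = 0 := by simpa using h
    linarith
  · intro h; simp [isingMag_of_le hβ h]

lemma variance_part (β₁ β₂ : ℝ) (hβ₁ : 0 ≤ β₁) (hβ₂ : 0 ≤ β₂) :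
    ((1 - isingMag β₁ ^ 2) * (1 - isingMag β₂ ^ 2) = 1 ↔ β₁ ≤ 1 ∧ β₂ ≤ 1)
    ∧ (¬(β₁ ≤ 1 ∧ β₂ ≤ 1) → (1 - isingMag β₁ ^ 2) * (1 - isingMag β₂ ^ 2) < 1) := by
  rw [← isingMag_sq_nonneg_pos hβ₁, ← isingMag_sq_nonneg_pos hβ₂]
  have h1 := isingMag_sq_lt hβ₁
  have h2 := isingMag_sq_lt hβ₂
  have h3 := sq_nonneg (isingMag β₁)
  have h4 := sq_nonneg (isingMag β₂)
  generalize isingMag β₁ ^ 2 = p at *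
  generalize isingMag β₂ ^ 2 = q at *
  have key : ¬ (p = 0 ∧ q = 0) → (1 - p) * (1 - q) < 1 := by
    intro h
    by_contra hc
    push Not at hc
    exact h ⟨by nlinarith, by nlinarith⟩
  refine ⟨⟨fun h => ?_, ?_⟩, key⟩
  · by_contra hc
    exact absurd h (key hc).ne
  · rintro ⟨rfl, rfl⟩; norm_num

lemma laplace_conc {V g : ℝ → ℝ} (hV : Continuous V) (hVc : Tendsto V (cocompact ℝ) atTop)
    (hIg : ∀ n : ℕ, 1 ≤ n → Integrable (fun θ => Real.exp (-(n * V θ))))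
    (hg : Continuous g) (hg0 : ∀ θ, 0 ≤ g θ) (hg1 : ∀ θ, g θ ≤ 1)
    (hmin : ∀ θ, (∀ x, V θ ≤ V x) → g θ = 0) :
    Tendsto (fun n : ℕ => ∫ θ, g θ ∂((volume : Measure ℝ).tilted (fun θ => -(n * V θ)))) atTop (𝓝 0) := by
  obtain ⟨θ₀, hθ₀⟩ := hV.exists_forall_le hVc
  rw [← tendsto_add_atTop_iff_nat 1]
  have hnn : ∀ n : ℕ, 0 ≤ ∫ θ, g θ ∂((volume : Measure ℝ).tilted (fun θ => -(n * V θ))) :=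
    fun n => integral_nonneg hg0
  rw [Metric.tendsto_atTop]
  intro ε hε
  -- gap
  obtain ⟨δ, hδ, hgap⟩ : ∃ δ > 0, ∀ θ, ε / 2 ≤ g θ → V θ₀ + 2 * δ ≤ V θ := by
    by_cases hA : ∃ x, ε / 2 ≤ g x
    · obtain ⟨x₀, hx₀⟩ := hA
      have hcl : IsClosed {x | ε / 2 ≤ g x} := isClosed_le continuous_const hg
      obtain ⟨x, hx, hxm⟩ := hV.continuousOn.exists_isMinOn' hcl (x₀ := x₀) hx₀
        ((hVc.eventually (eventually_ge_atTop (V x₀))).filter_mono inf_le_left)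
      have hlt : V θ₀ < V x := by
        refine lt_of_le_of_ne (hθ₀ x) fun he => ?_
        have h0 := hmin x (fun y => he ▸ hθ₀ y)
        have hx' : ε / 2 ≤ g x := hx
        linarith
      refine ⟨(V x - V θ₀) / 2, by linarith, fun θ hθ => ?_⟩
      have : V x ≤ V θ := hxm hθ
      linarith
    · push Not at hA
      exact ⟨1, one_pos, fun θ h => absurd h (not_le.2 (hA θ))⟩
  set B : Set ℝ := {θ | V θ < V θ₀ + δ} with hB
  have hBo : IsOpen B := isOpen_lt hV continuous_const
  have hi1 : Integrable (fun θ => Real.exp (-V θ)) := by simpa using hIg 1 le_rfl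
  set c := ∫ θ in B, Real.exp (-V θ) with hc
  have hcpos : 0 < c := by
    rw [hc, setIntegral_pos_iff_support_of_nonneg_ae]
    · have : Function.support (fun θ => Real.exp (-V θ)) ∩ B = B := by
        apply Set.inter_eq_right.2
        intro x _
        exact (Real.exp_pos _).ne'
      rw [this]
      exact hBo.measure_pos volume ⟨θ₀, by simp [hB, hδ]⟩
    · exact Filter.Eventually.of_forall fun x => (Real.exp_pos _).le
    · exact hi1.integrableOn
  set I1 := ∫ θ, Real.exp (-V θ) with hI1
  have hI1n : 0 ≤ I1 := integral_nonneg fun x => (Real.exp_pos _).le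
  have main : ∀ k : ℕ, ∫ θ, g θ ∂((volume : Measure ℝ).tilted (fun θ => -((k + 1 : ℕ) * V θ)))
      ≤ ε / 2 + I1 / c * Real.exp (-δ) ^ k := by
    intro k
    have hik := hIg (k + 1) (by omega)
    rw [integral_tilted]
    set I := ∫ θ, Real.exp (-((k + 1 : ℕ) * V θ)) with hI
    have hlow : Real.exp (-(k * (V θ₀ + δ))) * c ≤ I := by
      rw [hc, hI, ← integral_const_mul, ← integral_indicator hBo.measurableSet]
      apply integral_mono
      · exact (hi1.const_mul _).indicator hBo.measurableSet
      · exact hik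
      · intro θ
        by_cases hθ : θ ∈ B
        · rw [Set.indicator_of_mem hθ]
          simp only
          rw [← Real.exp_add]
          apply Real.exp_le_exp.2
          have : V θ ≤ V θ₀ + δ := le_of_lt hθ
          have hk : (0 : ℝ) ≤ k := k.cast_nonneg
          push_cast
          nlinarith
        · rw [Set.indicator_of_notMem hθ]; exact (Real.exp_pos _).le
    have hIpos : 0 < I := lt_of_lt_of_le (by positivity) hlow
    have hup : ∫ θ, Real.exp (-((k + 1 : ℕ) * V θ)) * g θ ≤
        ε / 2 * I + Real.exp (-(k * (V θ₀ + 2 * δ))) * I1 := by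
      rw [hI, hI1, ← integral_const_mul, ← integral_const_mul, ← integral_add (hik.const_mul _) (hi1.const_mul _)]
      apply integral_mono
      · refine hik.mul_bdd (c := 1) hg.aestronglyMeasurable (Filter.Eventually.of_forall fun x => ?_)
        rw [Real.norm_of_nonneg (hg0 x)]; exact hg1 x
      · exact (hik.const_mul _).add (hi1.const_mul _)
      · intro θ
        simp only
        have hE := Real.exp_pos (-((k + 1 : ℕ) * V θ))
        rcases le_or_gt (ε / 2) (g θ) with h | h
        · have h1 := hgap θ h
          have h2 : Real.exp (-((k + 1 : ℕ) * V θ)) ≤ Real.exp (-(k * (V θ₀ + 2 * δ))) * Real.exp (-V θ) := by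
            rw [← Real.exp_add]
            apply Real.exp_le_exp.2
            have hk : (0 : ℝ) ≤ k := k.cast_nonneg
            push_cast
            nlinarith
          nlinarith [hg1 θ]
        · have : 0 < Real.exp (-(k * (V θ₀ + 2 * δ))) * Real.exp (-V θ) := by positivity
          nlinarith
    calc ∫ θ, (Real.exp (-((k + 1 : ℕ) * V θ)) / I) • g θ
        = (∫ θ, Real.exp (-((k + 1 : ℕ) * V θ)) * g θ) / I := by
          rw [← integral_div]; congr 1; funext θ; simp only [smul_eq_mul]; ring
      _ ≤ (ε / 2 * I + Real.exp (-(k * (V θ₀ + 2 * δ))) * I1) / I := by gcongr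
      _ = ε / 2 + Real.exp (-(k * (V θ₀ + 2 * δ))) * I1 / I := by field_simp
      _ ≤ ε / 2 + Real.exp (-(k * (V θ₀ + 2 * δ))) * I1 / (Real.exp (-(k * (V θ₀ + δ))) * c) := by gcongr
      _ = ε / 2 + I1 / c * Real.exp (-δ) ^ k := by
          rw [← Real.exp_nat_mul]
          have : Real.exp (-(k * (V θ₀ + 2 * δ))) = Real.exp (k * -δ) * Real.exp (-(k * (V θ₀ + δ))) := by
            rw [← Real.exp_add]; ring_nf
          rw [this]
          field_simp
  have hlim : Tendsto (fun k : ℕ => I1 / c * Real.exp (-δ) ^ k) atTop (𝓝 0) := by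
    have := (tendsto_pow_atTop_nhds_zero_of_lt_one (Real.exp_pos (-δ)).le
      (by rw [Real.exp_lt_one_iff]; linarith)).const_mul (I1 / c)
    simpa using this
  obtain ⟨N, hN⟩ := eventually_atTop.1 (hlim.eventually (gt_mem_nhds (half_pos hε)))
  refine ⟨N, fun k hk => ?_⟩
  rw [Real.dist_eq, sub_zero, abs_of_nonneg (hnn _)]
  have := main k
  have := hN k hk
  linarith

lemma gauss_int {c : ℝ} (hc : 0 < c) (S : ℝ) :
    Integrable (fun θ => Real.exp (-(c * θ ^ 2 / 2) + θ * S)) ∧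
    ∫ θ, Real.exp (-(c * θ ^ 2 / 2) + θ * S) = Real.sqrt (Real.pi / (c / 2)) * Real.exp (S ^ 2 / (2 * c)) := by
  have e : (fun θ => Real.exp (-(c * θ ^ 2 / 2) + θ * S)) =
      fun θ => Real.exp (S ^ 2 / (2 * c)) * Real.exp (-(c / 2) * (θ - S / c) ^ 2) := by
    funext θ
    rw [← Real.exp_add]
    congr 1
    field_simp
    ring
  have h := integrable_exp_neg_mul_sq (half_pos hc)
  constructor
  · rw [e]
    exact (h.comp_sub_right (S / c)).const_mul _
  · rw [e, integral_const_mul, integral_sub_right_eq_self (fun x => Real.exp (-(c / 2) * x ^ 2)),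
      integral_gaussian, mul_comm]

lemma prB_tanh (θ : ℝ) (b : Bool) : prB (Real.tanh θ) b * Real.cosh θ = Real.exp (θ * sgB b) / 2 := by
  have := (Real.cosh_pos θ).ne'
  rw [Real.tanh_eq_sinh_div_cosh]
  cases b
  · simp [prB, sgB]
    rw [← Real.cosh_sub_sinh]; field_simp; ring
  · simp [prB, sgB]
    rw [← Real.cosh_add_sinh]; field_simp

lemma exp_VB_mul {β : ℝ} (hβ : 0 < β) {n : ℕ} (s : Fin n → Bool) (θ : ℝ) :
    Real.exp (-(n * VB β θ)) * ∏ i, prB (Real.tanh θ) (s i) =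
      (1 / 2) ^ n * Real.exp (-((n / β) * θ ^ 2 / 2) + θ * ∑ i, sgB (s i)) := by
  have h1 : Real.exp (-(n * VB β θ)) = Real.exp (-((n / β) * θ ^ 2 / 2)) * Real.cosh θ ^ n := by
    have : Real.cosh θ ^ n = Real.exp (n * Real.log (Real.cosh θ)) := by
      rw [Real.exp_nat_mul, Real.exp_log (Real.cosh_pos θ)]
    rw [this, ← Real.exp_add, VB]
    congr 1
    field_simp
    ring
  have h2 : Real.cosh θ ^ n * ∏ i, prB (Real.tanh θ) (s i) = (1 / 2) ^ n * Real.exp (θ * ∑ i, sgB (s i)) := by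
    calc _ = ∏ i, (prB (Real.tanh θ) (s i) * Real.cosh θ) := by
          rw [Finset.prod_mul_distrib]; simp [mul_comm]
      _ = ∏ i, ((1 / 2) * Real.exp (θ * sgB (s i))) := by
          refine Finset.prod_congr rfl fun i _ => ?_
          rw [prB_tanh]; ring
      _ = _ := by
          rw [Finset.prod_mul_distrib, ← Real.exp_sum, ← Finset.mul_sum]; simp
  rw [h1, mul_assoc, h2, Real.exp_add]; ring

lemma integrable_exp_VB {β : ℝ} (hβ : 0 < β) {n : ℕ} (hn : 1 ≤ n) :
    Integrable (fun θ => Real.exp (-(n * VB β θ))) := by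
  have hn0 : (0 : ℝ) < n := by exact_mod_cast hn
  have e : (fun θ => Real.exp (-(n * VB β θ))) = fun θ => ∑ s : Fin n → Bool,
      (1 / 2 : ℝ) ^ n * Real.exp (-((n / β) * θ ^ 2 / 2) + θ * ∑ i, sgB (s i)) := by
    funext θ
    simp_rw [← exp_VB_mul hβ, ← Finset.mul_sum, sum_prod_prB, mul_one]
  rw [e]
  exact integrable_finsetSum _ fun s _ => (gauss_int (by positivity) _).1.const_mul _

lemma weight_eq {n : ℕ} (hn : 1 ≤ n) (β : ℝ) (s : Fin n → Bool) :
    isingWeight β (QCW n) (pmVec s) =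
      Real.exp (-(β / 2)) * Real.exp (β / (2 * n) * (∑ i, sgB (s i)) ^ 2) := by
  have hn0 : (n : ℝ) ≠ 0 := by positivity
  have hq : ∀ i, (QCW n).mulVec (pmVec s) i = (n : ℝ)⁻¹ * ((∑ j, sgB (s j)) - sgB (s i)) := by
    intro i
    have : ∀ j, QCW n i j * pmVec s j = (n : ℝ)⁻¹ * (sgB (s j) - if i = j then sgB (s j) else 0) := by
      intro j
      simp only [QCW, pmVec_eq]
      split_ifs <;> ring
    simp only [Matrix.mulVec, dotProduct, this]
    rw [← Finset.mul_sum, Finset.sum_sub_distrib]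
    simp
  have hsq : ∀ i, sgB (s i) * sgB (s i) = 1 := by
    intro i; cases s i <;> simp [sgB]
  have hd : pmVec s ⬝ᵥ (QCW n).mulVec (pmVec s) = (n : ℝ)⁻¹ * ((∑ j, sgB (s j)) ^ 2 - n) := by
    simp only [dotProduct, hq, pmVec_eq]
    calc _ = ∑ i, ((n : ℝ)⁻¹ * (sgB (s i) * (∑ j, sgB (s j)) - 1)) := by
          refine Finset.sum_congr rfl fun i _ => ?_
          linear_combination (-(n : ℝ)⁻¹) * hsq i
      _ = _ := by
          rw [← Finset.mul_sum, Finset.sum_sub_distrib, ← Finset.sum_mul]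
          simp only [Finset.sum_const, Finset.card_univ, Fintype.card_fin, nsmul_eq_mul, mul_one]
          ring
  rw [isingWeight, hd, ← Real.exp_add]
  congr 1
  field_simp
  ring

lemma abs_tanh_sq_le {β : ℝ} (hβ : 0 ≤ β) (θ : ℝ) : |Real.tanh θ ^ 2 - isingMag β ^ 2| ≤ 1 := by
  have h1 := isingMag_sq_lt hβ
  have h2 := Real.tanh_sq_lt_one θ
  rw [abs_le]; constructor <;> nlinarith [sq_nonneg (isingMag β), sq_nonneg (Real.tanh θ)]

lemma prod_prB_integrable {n : ℕ} (s : Fin n → Bool) (ρ : Measure ℝ) [IsFiniteMeasure ρ] :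
    Integrable (fun θ => ∏ i, prB (Real.tanh θ) (s i)) ρ := by
  have hc : Continuous (fun θ => ∏ i, prB (Real.tanh θ) (s i)) := by
    refine continuous_finsetProd _ fun i _ => ?_
    unfold prB
    have := continuous_tanh'
    fun_prop
  refine Integrable.of_bound hc.aestronglyMeasurable 1 (Filter.Eventually.of_forall fun θ => ?_)
  rw [Real.norm_of_nonneg (Finset.prod_nonneg fun i _ => prB_nonneg (Real.abs_tanh_lt_one θ).le _)]
  refine Finset.prod_le_one (fun i _ => prB_nonneg (Real.abs_tanh_lt_one θ).le _) fun i _ => ?_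
  have := abs_lt.1 (Real.abs_tanh_lt_one θ)
  cases s i <;> simp [prB, sgB] <;> linarith

/-- a family proportional to the weights and of total mass one is the Ising law -/
lemma ising_of_prop {n : ℕ} {β c : ℝ} {P : (Fin n → Bool) → ℝ} (_ : c ≠ 0)
    (h : ∀ s, P s = c * isingWeight β (QCW n) (pmVec s)) (hs : ∑ s, P s = 1) (s : Fin n → Bool) :
    isingWeight β (QCW n) (pmVec s) / isingZ (Fin n) β (QCW n) = P s := by
  have hz : c * isingZ (Fin n) β (QCW n) = 1 := by
    rw [isingZ, Finset.mul_sum, ← hs]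
    exact Finset.sum_congr rfl fun s _ => (h s).symm
  have hz0 : isingZ (Fin n) β (QCW n) ≠ 0 := by
    intro h0; rw [h0] at hz; simp at hz
  rw [h s, div_eq_iff hz0]
  linear_combination (-isingWeight β (QCW n) (pmVec s)) * hz

lemma hs_mix (β : ℝ) (hβ : 0 ≤ β) : ∃ ρ : ℕ → Measure ℝ,
    (∀ n, 1 ≤ n → IsProbabilityMeasure (ρ n)) ∧
    (∀ n, 1 ≤ n → ∀ s : Fin n → Bool, isingWeight β (QCW n) (pmVec s) / isingZ (Fin n) β (QCW n) =
      ∫ θ, ∏ i, prB (Real.tanh θ) (s i) ∂(ρ n)) ∧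
    Tendsto (fun n => ∫ θ, |Real.tanh θ ^ 2 - isingMag β ^ 2| ∂(ρ n)) atTop (𝓝 0) := by
  rcases hβ.eq_or_lt with rfl | hb
  · refine ⟨fun _ => Measure.dirac 0, fun n _ => inferInstance, fun n hn s => ?_, ?_⟩
    · refine ising_of_prop (P := fun s => ∫ θ, ∏ i, prB (Real.tanh θ) (s i) ∂(Measure.dirac (0 : ℝ)))
        (c := (1 / 2) ^ n) (by positivity) (fun s => ?_) ?_ s
      · rw [integral_dirac, weight_eq hn]
        simp [prB]
      · simp only [integral_dirac]
        exact sum_prod_prB n _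
    · simp [isingMag_of_le le_rfl zero_le_one]
  · have hp : ∀ n : ℕ, 1 ≤ n → IsProbabilityMeasure ((volume : Measure ℝ).tilted (fun θ => -(n * VB β θ))) :=
      fun n hn => isProbabilityMeasure_tilted (integrable_exp_VB hb hn)
    refine ⟨fun n => (volume : Measure ℝ).tilted (fun θ => -(n * VB β θ)), hp, fun n hn s => ?_, ?_⟩
    · have := hp n hn
      have hn0 : (0 : ℝ) < n := by exact_mod_cast hn
      set I := ∫ θ, Real.exp (-(n * VB β θ)) with hI
      have hIpos : 0 < I := integral_exp_pos (integrable_exp_VB hb hn)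
      refine ising_of_prop (P := fun s => ∫ θ, ∏ i, prB (Real.tanh θ) (s i)
          ∂((volume : Measure ℝ).tilted (fun θ => -(n * VB β θ))))
        (c := (1 / 2) ^ n * Real.sqrt (Real.pi / (n / β / 2)) * Real.exp (β / 2) / I)
        (by positivity) (fun s => ?_) ?_ s
      · rw [integral_tilted]
        calc _ = (∫ θ, Real.exp (-(n * VB β θ)) * ∏ i, prB (Real.tanh θ) (s i)) / I := by
              rw [← integral_div]; congr 1; funext θ; simp only [smul_eq_mul]; ring
          _ = _ := by
              simp_rw [exp_VB_mul hb]
              rw [integral_const_mul, (gauss_int (by positivity) _).2, weight_eq hn, Real.exp_neg]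
              have e : (∑ i, sgB (s i)) ^ 2 / (2 * (n / β)) = β / (2 * n) * (∑ i, sgB (s i)) ^ 2 := by
                field_simp
              rw [e]
              have := (Real.exp_pos (β / 2)).ne'
              field_simp
      · rw [← integral_finsetSum _ (fun s _ => prod_prB_integrable s _)]
        simp [sum_prod_prB]
    · refine laplace_conc (continuous_VB hb) (VB_coercive hb) (fun n hn => integrable_exp_VB hb hn)
        ?_ (fun θ => abs_nonneg _) (abs_tanh_sq_le hβ) ?_
      · have := continuous_tanh'
        fun_prop
      · intro θ h
        rw [VB_min hb h]; simp

lemma isingZ_pos {n : ℕ} (β : ℝ) : 0 < isingZ (Fin n) β (QCW n) :=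
  Finset.sum_pos (fun _ _ => Real.exp_pos _) Finset.univ_nonempty

/-- Ising probabilities -/
def ipB (n : ℕ) (β : ℝ) (s : Fin n → Bool) : ℝ :=
  isingWeight β (QCW n) (pmVec s) / isingZ (Fin n) β (QCW n)

lemma ipB_nonneg (n : ℕ) (β : ℝ) (s : Fin n → Bool) : 0 ≤ ipB n β s :=
  div_nonneg (Real.exp_pos _).le (isingZ_pos β).le

lemma sum_ipB (n : ℕ) (β : ℝ) : ∑ s, ipB n β s = 1 := by
  unfold ipB
  rw [← Finset.sum_div]
  exact div_self (isingZ_pos β).ne'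

lemma isingMeasure_prob (n : ℕ) (β : ℝ) : IsProbabilityMeasure (isingMeasure (Fin n) β (QCW n)) := by
  constructor
  have h : ∑ s : Fin n → Bool, ENNReal.ofReal (ipB n β s) = 1 := by
    rw [← ENNReal.ofReal_sum_of_nonneg fun s _ => ipB_nonneg n β s, sum_ipB, ENNReal.ofReal_one]
  simp only [isingMeasure, Measure.finsetSum_apply, Measure.smul_apply, smul_eq_mul, measure_univ, mul_one]
  exact h

lemma integral_ising (n : ℕ) (β : ℝ) (f : (Fin n → ℝ) → ℂ) :
    ∫ x, f x ∂(isingMeasure (Fin n) β (QCW n)) = ∑ s, (ipB n β s : ℂ) * f (pmVec s) := by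
  rw [isingMeasure, integral_finsetSum_measure]
  · refine Finset.sum_congr rfl fun s _ => ?_
    rw [integral_smul_measure, integral_dirac,
      show (ENNReal.ofReal (isingWeight β (QCW n) (pmVec s) / isingZ (Fin n) β (QCW n))).toReal
        = ipB n β s from ENNReal.toReal_ofReal (ipB_nonneg n β s), Complex.real_smul]
  · intro s _
    refine Integrable.smul_measure ?_ ENNReal.ofReal_ne_top
    exact integrable_dirac (by simp)

lemma continuous_sampleCov (n : ℕ) :
    Continuous (fun p : (Fin n → ℝ) × (Fin n → ℝ) => Real.sqrt n * sampleCov p.1 p.2) := by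
  unfold sampleCov sampleMean
  fun_prop

lemma charFun_eq (n : ℕ) (β₁ β₂ t : ℝ) :
    charFun (Measure.map
        (fun p : (Fin n → ℝ) × (Fin n → ℝ) => Real.sqrt n * sampleCov p.1 p.2)
        ((isingMeasure (Fin n) β₁ (QCW n)).prod (isingMeasure (Fin n) β₂ (QCW n)))) t =
    ∑ s : Fin n → Bool, ∑ u : Fin n → Bool, ((ipB n β₁ s * ipB n β₂ u : ℝ) : ℂ) *
      Complex.exp (((t * (Real.sqrt n * sampleCov (pmVec s) (pmVec u)) : ℝ) : ℂ) * Complex.I) := by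
  have := isingMeasure_prob n β₁
  have := isingMeasure_prob n β₂
  have hc := continuous_sampleCov n
  rw [charFun_apply_real, integral_map hc.aemeasurable (by fun_prop), integral_prod]
  · rw [integral_ising]
    refine Finset.sum_congr rfl fun s _ => ?_
    rw [integral_ising, Finset.mul_sum]
    refine Finset.sum_congr rfl fun u _ => ?_
    push_cast
    ring
  · refine Integrable.of_bound (Continuous.aestronglyMeasurable ?_) 1 (Filter.Eventually.of_forall fun p => ?_)
    · have := Complex.continuous_ofReal.comp hc
      exact Complex.continuous_exp.comp ((continuous_const.mul this).mul continuous_const)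
    · rw [← Complex.ofReal_mul, Complex.norm_exp_ofReal_mul_I]

lemma exp_lip {x y : ℝ} (hx : 0 ≤ x) (hy : 0 ≤ y) : |Real.exp (-x) - Real.exp (-y)| ≤ |x - y| := by
  wlog h : x ≤ y generalizing x y
  · rw [abs_sub_comm, abs_sub_comm x]; exact this hy hx (le_of_not_ge h)
  have h1 : Real.exp (-y) ≤ Real.exp (-x) := Real.exp_le_exp.2 (by linarith)
  rw [abs_of_nonneg (by linarith), abs_of_nonpos (by linarith)]
  have h2 : Real.exp (-y) = Real.exp (-x) * Real.exp (x - y) := by rw [← Real.exp_add]; ring_nf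
  have h3 := Real.add_one_le_exp (x - y)
  have h4 : Real.exp (-x) ≤ 1 := Real.exp_le_one_iff.2 (by linarith)
  rw [h2]
  nlinarith [Real.exp_pos (-x)]

lemma charFun_tendsto (β₁ β₂ : ℝ) (hβ₁ : 0 ≤ β₁) (hβ₂ : 0 ≤ β₂) (t : ℝ) :
    Tendsto (fun n : ℕ => charFun (Measure.map
        (fun p : (Fin n → ℝ) × (Fin n → ℝ) => Real.sqrt n * sampleCov p.1 p.2)
        ((isingMeasure (Fin n) β₁ (QCW n)).prod (isingMeasure (Fin n) β₂ (QCW n)))) t) atTop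
      (𝓝 (Complex.exp ((-(t ^ 2 * ((1 - isingMag β₁ ^ 2) * (1 - isingMag β₂ ^ 2)) / 2) : ℝ) : ℂ))) := by
  obtain ⟨ρ₁, hp₁, hm₁, hl₁⟩ := hs_mix β₁ hβ₁
  obtain ⟨ρ₂, hp₂, hm₂, hl₂⟩ := hs_mix β₂ hβ₂
  obtain ⟨δ, hδ, hF⟩ := FB_tendsto t
  rw [tendsto_iff_norm_sub_tendsto_zero]
  have hlim : Tendsto (fun n => δ n + t ^ 2 / 2 * ((∫ θ, |Real.tanh θ ^ 2 - isingMag β₁ ^ 2| ∂(ρ₁ n))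
      + ∫ θ, |Real.tanh θ ^ 2 - isingMag β₂ ^ 2| ∂(ρ₂ n))) atTop (𝓝 0) := by
    simpa using hδ.add ((hl₁.add hl₂).const_mul (t ^ 2 / 2))
  refine squeeze_zero' (Filter.Eventually.of_forall fun n => norm_nonneg _) ?_ hlim
  filter_upwards [eventually_ge_atTop 1] with n hn
  have := hp₁ n hn
  have := hp₂ n hn
  set m₁ := isingMag β₁ with hm₁d
  set m₂ := isingMag β₂ with hm₂d
  have hIg : ∀ s u : Fin n → Bool, Integrable (fun p : ℝ × ℝ =>
      (((∏ i, prB (Real.tanh p.1) (s i)) * (∏ i, prB (Real.tanh p.2) (u i)) : ℝ) : ℂ))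
      ((ρ₁ n).prod (ρ₂ n)) := fun s u =>
    ((prod_prB_integrable s (ρ₁ n)).mul_prod (prod_prB_integrable u (ρ₂ n))).ofReal
  have hFint : Integrable (fun p : ℝ × ℝ => FB n t (Real.tanh p.1) (Real.tanh p.2)) ((ρ₁ n).prod (ρ₂ n)) := by
    unfold FB
    exact integrable_finsetSum _ fun s _ => integrable_finsetSum _ fun u _ => (hIg s u).mul_const _
  have hrep : charFun (Measure.map
        (fun p : (Fin n → ℝ) × (Fin n → ℝ) => Real.sqrt n * sampleCov p.1 p.2)
        ((isingMeasure (Fin n) β₁ (QCW n)).prod (isingMeasure (Fin n) β₂ (QCW n)))) t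
      = ∫ p : ℝ × ℝ, FB n t (Real.tanh p.1) (Real.tanh p.2) ∂((ρ₁ n).prod (ρ₂ n)) := by
    rw [charFun_eq]
    unfold FB
    rw [integral_finsetSum _ (fun s _ => integrable_finsetSum _ fun u _ => (hIg s u).mul_const _)]
    refine Finset.sum_congr rfl fun s _ => ?_
    rw [integral_finsetSum _ (fun u _ => (hIg s u).mul_const _)]
    refine Finset.sum_congr rfl fun u _ => ?_
    rw [integral_mul_const, integral_complex_ofReal,
      integral_prod_mul (fun x => ∏ i, prB (Real.tanh x) (s i)) (fun y => ∏ i, prB (Real.tanh y) (u i)),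
      ← hm₁ n hn s, ← hm₂ n hn u]
    rfl
  rw [hrep]
  set K : ℂ := Complex.exp ((-(t ^ 2 * ((1 - m₁ ^ 2) * (1 - m₂ ^ 2)) / 2) : ℝ) : ℂ) with hK
  have hi₁ : Integrable (fun θ => |Real.tanh θ ^ 2 - m₁ ^ 2|) (ρ₁ n) := by
    have := continuous_tanh'
    refine Integrable.of_bound (Continuous.aestronglyMeasurable (by fun_prop)) 1 (Filter.Eventually.of_forall fun θ => ?_)
    rw [Real.norm_eq_abs, abs_abs]; exact abs_tanh_sq_le hβ₁ θ
  have hi₂ : Integrable (fun θ => |Real.tanh θ ^ 2 - m₂ ^ 2|) (ρ₂ n) := by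
    have := continuous_tanh'
    refine Integrable.of_bound (Continuous.aestronglyMeasurable (by fun_prop)) 1 (Filter.Eventually.of_forall fun θ => ?_)
    rw [Real.norm_eq_abs, abs_abs]; exact abs_tanh_sq_le hβ₂ θ
  have hj₁ := hi₁.comp_fst (ρ₂ n)
  have hj₂ := hi₂.comp_snd (ρ₁ n)
  have hcst : K = ∫ _p : ℝ × ℝ, K ∂((ρ₁ n).prod (ρ₂ n)) := by simp
  rw [hcst, ← integral_sub hFint (integrable_const _)]
  have hpt : ∀ p : ℝ × ℝ, ‖FB n t (Real.tanh p.1) (Real.tanh p.2) - K‖ ≤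
      δ n + t ^ 2 / 2 * (|Real.tanh p.1 ^ 2 - m₁ ^ 2| + |Real.tanh p.2 ^ 2 - m₂ ^ 2|) := by
    intro p
    have h1 := hF n hn (Real.tanh p.1) (Real.tanh p.2) (Real.abs_tanh_lt_one _).le (Real.abs_tanh_lt_one _).le
    have ha := Real.tanh_sq_lt_one p.1
    have hb := Real.tanh_sq_lt_one p.2
    have ha0 := sq_nonneg (Real.tanh p.1)
    have hb0 := sq_nonneg (Real.tanh p.2)
    have hc : m₁ ^ 2 < 1 := isingMag_sq_lt hβ₁
    have hd : m₂ ^ 2 < 1 := isingMag_sq_lt hβ₂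
    have hc0 := sq_nonneg m₁
    have hd0 := sq_nonneg m₂
    refine (norm_sub_le_norm_sub_add_norm_sub _ _ K).trans (add_le_add h1 ?_)
    rw [hK, ← Complex.ofReal_exp, ← Complex.ofReal_exp, ← Complex.ofReal_sub, Complex.norm_real,
      Real.norm_eq_abs]
    generalize Real.tanh p.1 ^ 2 = A at *
    generalize Real.tanh p.2 ^ 2 = B at *
    generalize m₁ ^ 2 = C at *
    generalize m₂ ^ 2 = D at *
    have hAB := mul_nonneg (sub_nonneg.2 ha.le) (sub_nonneg.2 hb.le)
    have hCD := mul_nonneg (sub_nonneg.2 hc.le) (sub_nonneg.2 hd.le)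
    refine (exp_lip (by positivity) (by positivity)).trans ?_
    have e : t ^ 2 * ((1 - A) * (1 - B)) / 2 - t ^ 2 * ((1 - C) * (1 - D)) / 2 =
        t ^ 2 / 2 * (-((A - C) * (1 - B)) - (1 - C) * (B - D)) := by ring
    rw [e, abs_mul, abs_of_nonneg (by positivity : (0:ℝ) ≤ t ^ 2 / 2)]
    refine mul_le_mul_of_nonneg_left ?_ (by positivity)
    refine (abs_sub _ _).trans (add_le_add ?_ ?_)
    · rw [abs_neg, abs_mul, abs_of_nonneg (by linarith : 0 ≤ 1 - B)]
      exact mul_le_of_le_one_right (abs_nonneg _) (by linarith)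
    · rw [abs_mul, abs_of_nonneg (by linarith : 0 ≤ 1 - C)]
      exact mul_le_of_le_one_left (abs_nonneg _) (by linarith)
  have hj : Integrable (fun p : ℝ × ℝ => |Real.tanh p.1 ^ 2 - m₁ ^ 2| + |Real.tanh p.2 ^ 2 - m₂ ^ 2|)
      ((ρ₁ n).prod (ρ₂ n)) := hj₁.add hj₂
  have hgi : Integrable (fun p : ℝ × ℝ => δ n + t ^ 2 / 2 *
      (|Real.tanh p.1 ^ 2 - m₁ ^ 2| + |Real.tanh p.2 ^ 2 - m₂ ^ 2|))
      ((ρ₁ n).prod (ρ₂ n)) := (integrable_const _).add (hj.const_mul (t ^ 2 / 2))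
  refine (norm_integral_le_of_norm_le hgi (Filter.Eventually.of_forall hpt)).trans (le_of_eq ?_)
  rw [integral_add (integrable_const _) (hj.const_mul (t ^ 2 / 2)), integral_const_mul,
    integral_add hj₁ hj₂, integral_fun_fst (fun θ => |Real.tanh θ ^ 2 - m₁ ^ 2|),
    integral_fun_snd (fun θ => |Real.tanh θ ^ 2 - m₂ ^ 2|)]
  simp

/-- **Theorem 2 (Curie–Weiss, sample covariance).** If `X ~ P_{β₁,Q^{CW}}` and
`Y ~ P_{β₂,Q^{CW}}` are independent, then `√n Tₙ →d N(0, (1-m(β₁)²)(1-m(β₂)²))`; the limiting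
variance is `1` iff `β₁ ≤ 1` and `β₂ ≤ 1`, and is `< 1` otherwise. -/
theorem curieWeiss_sampleCov_clt (β₁ β₂ : ℝ) (hβ₁ : 0 ≤ β₁) (hβ₂ : 0 ≤ β₂) :
    TendstoInDistribution
      (fun n => Measure.map
        (fun p : (Fin n → ℝ) × (Fin n → ℝ) => Real.sqrt n * sampleCov p.1 p.2)
        ((isingMeasure (Fin n) β₁ (QCW n)).prod (isingMeasure (Fin n) β₂ (QCW n))))
      (gaussianReal 0 (Real.toNNReal ((1 - isingMag β₁ ^ 2) * (1 - isingMag β₂ ^ 2))))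
    ∧ ((1 - isingMag β₁ ^ 2) * (1 - isingMag β₂ ^ 2) = 1 ↔ β₁ ≤ 1 ∧ β₂ ≤ 1)
    ∧ (¬(β₁ ≤ 1 ∧ β₂ ≤ 1) → (1 - isingMag β₁ ^ 2) * (1 - isingMag β₂ ^ 2) < 1) := by
  refine ⟨?_, variance_part β₁ β₂ hβ₁ hβ₂⟩
  have hpr : ∀ n : ℕ, IsProbabilityMeasure (Measure.map
        (fun p : (Fin n → ℝ) × (Fin n → ℝ) => Real.sqrt n * sampleCov p.1 p.2)
        ((isingMeasure (Fin n) β₁ (QCW n)).prod (isingMeasure (Fin n) β₂ (QCW n)))) := by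
    intro n
    have := isingMeasure_prob n β₁
    have := isingMeasure_prob n β₂
    exact Measure.isProbabilityMeasure_map (continuous_sampleCov n).aemeasurable
  have hv : 0 ≤ (1 - isingMag β₁ ^ 2) * (1 - isingMag β₂ ^ 2) :=
    mul_nonneg (sub_nonneg.2 (isingMag_sq_lt hβ₁).le) (sub_nonneg.2 (isingMag_sq_lt hβ₂).le)
  have key := ProbabilityMeasure.tendsto_of_tendsto_charFun
    (μ := fun n => ⟨_, hpr n⟩)
    (μ₀ := ⟨gaussianReal 0 (Real.toNNReal ((1 - isingMag β₁ ^ 2) * (1 - isingMag β₂ ^ 2))), inferInstance⟩)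
    (by
      intro t
      have h := charFun_tendsto β₁ β₂ hβ₁ hβ₂ t
      simp only [ProbabilityMeasure.coe_mk]
      rw [charFun_gaussianReal]
      refine h.trans (le_of_eq ?_)
      congr 2
      rw [Real.coe_toNNReal _ hv]
      push_cast
      ring)
  exact fun f => (ProbabilityMeasure.tendsto_iff_forall_integral_tendsto.1 key) f

end
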